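/- Define the norms ‖u‖_L := √(B(u,Pu)) and ‖v‖_X := √(∫_{−1}^{1} ‖v(s)‖²_A ds) on V_p. Then for all u, v ∈ V_p: (i) |B(u,v)| ≤ ‖u‖_L ‖v‖_X; (ii) ‖Pu‖_X = ‖u‖_L; and consequently (iii) for every nonzero u ∈ V_p, the supremum over nonzero v ∈ V_p of B(u,v)/‖v‖_X equals ‖u‖_L, the supremum being attained at v = Pu. -/

import Mathlib

open Matrix Polynomial

/-- The `k`-th Legendre polynomial (Rodrigues' formula), normalized so that `L_k(1) = 1`. -/
noncomputable def legendre (k : ℕ) : Polynomial ℝ :=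
  ((2 ^ k * (Nat.factorial k) : ℝ))⁻¹ •
    ((fun q => Polynomial.derivative q)^[k] ((Polynomial.X ^ 2 - 1) ^ k))

/-- Evaluation at `s` of the `ℝⁿ`-valued polynomial with coefficients `c` (degree ≤ p). -/
noncomputable def pev {n p : ℕ} (c : Fin (p + 1) → Fin n → ℝ) (s : ℝ) : Fin n → ℝ :=
  ∑ j : Fin (p + 1), s ^ (j : ℕ) • c j

/-- Evaluation at `s` of the derivative of the `ℝⁿ`-valued polynomial with coefficients `c`. -/
noncomputable def pdev {n p : ℕ} (c : Fin (p + 1) → Fin n → ℝ) (s : ℝ) : Fin n → ℝ :=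
  ∑ j : Fin (p + 1), ((((j : ℕ) : ℝ)) * s ^ ((j : ℕ) - 1)) • c j

/-- Evaluation at `s` of `(I v)'`, the derivative of the reconstruction `I v` of the
`ℝⁿ`-valued polynomial `v` with coefficients `c`, where the reconstruction operator
`I v := v − v(−1)·(−1)^p (L_p − L_{p+1})/2` acts coefficientwise. -/
noncomputable def reconD {n p : ℕ} (c : Fin (p + 1) → Fin n → ℝ) (s : ℝ) : Fin n → ℝ :=
  pdev c s -
    ((-1 : ℝ) ^ p * (Polynomial.derivative (legendre p - legendre (p + 1))).eval s / 2) •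
      pev c (-1)

/-- The DG bilinear form `B(u, ·)` applied to a test function `g : ℝ → ℝⁿ`:
`B(u,g) = ∫_{−1}^{1} (u'(s), g(s))_M ds + (u(−1), g(−1))_M + (τ/2) ∫_{−1}^{1} (u(s), g(s))_A ds`,
where `(u,v)_M := vᵀ M u`. -/
noncomputable def Bform {n p : ℕ} (M A : Matrix (Fin n) (Fin n) ℝ) (τ : ℝ)
    (c : Fin (p + 1) → Fin n → ℝ) (g : ℝ → Fin n → ℝ) : ℝ :=
  (∫ s in (-1 : ℝ)..1, g s ⬝ᵥ (M *ᵥ pdev c s)) + g (-1) ⬝ᵥ (M *ᵥ pev c (-1)) +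
    (τ / 2) * ∫ s in (-1 : ℝ)..1, g s ⬝ᵥ (A *ᵥ pev c s)

/-- The operator `P v := A⁻¹ M (I v)' + (τ/2) v`, evaluated at `s`. -/
noncomputable def Pop {n p : ℕ} (M A : Matrix (Fin n) (Fin n) ℝ) (τ : ℝ)
    (c : Fin (p + 1) → Fin n → ℝ) (s : ℝ) : Fin n → ℝ :=
  (A⁻¹ * M) *ᵥ reconD c s + (τ / 2) • pev c s

/-- The parabolic energy norm `‖u‖_L := √(B(u, P u))`. -/
noncomputable def Lnorm {n p : ℕ} (M A : Matrix (Fin n) (Fin n) ℝ) (τ : ℝ)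
    (c : Fin (p + 1) → Fin n → ℝ) : ℝ :=
  Real.sqrt (Bform M A τ c (fun s => Pop M A τ c s))

/-- The test norm `‖g‖_X := √(∫_{−1}^{1} ‖g(s)‖²_A ds)`. -/
noncomputable def Xnorm {n : ℕ} (A : Matrix (Fin n) (Fin n) ℝ) (g : ℝ → Fin n → ℝ) : ℝ :=
  Real.sqrt (∫ s in (-1 : ℝ)..1, g s ⬝ᵥ (A *ᵥ g s))

theorem rodrigues_factor (k : ℕ) :
    ((X ^ 2 - 1) ^ k : ℝ[X]) = (X - C 1) ^ k * (X + 1) ^ k ∧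
    ((X ^ 2 - 1) ^ k : ℝ[X]) = (X - C (-1)) ^ k * (X - 1) ^ k := by
  constructor <;> rw [← mul_pow] <;> congr 1 <;> simp <;> ring

theorem legendre_eval_one (k : ℕ) : (legendre k).eval 1 = 1 := by
  have h := aeval_iterate_derivative_self (A := ℝ) ((X ^ 2 - 1) ^ k : ℝ[X]) k 1
    (p' := (X + 1) ^ k) (by simpa using (rodrigues_factor k).1)
  have h2 : eval 1 (derivative^[k] ((X ^ 2 - 1) ^ k : ℝ[X])) = (k.factorial : ℝ) * 2 ^ k := by
    simpa [coe_aeval_eq_eval, one_add_one_eq_two] using h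
  unfold legendre
  rw [eval_smul, h2, smul_eq_mul, mul_comm (k.factorial : ℝ)]
  exact inv_mul_cancel₀ (by positivity)

theorem legendre_eval_neg_one (k : ℕ) : (legendre k).eval (-1) = (-1) ^ k := by
  have h := aeval_iterate_derivative_self (A := ℝ) ((X ^ 2 - 1) ^ k : ℝ[X]) k (-1)
    (p' := (X - 1) ^ k) (by simpa using (rodrigues_factor k).2)
  have h2 : eval (-1) (derivative^[k] ((X ^ 2 - 1) ^ k : ℝ[X]))
      = (k.factorial : ℝ) * (-2) ^ k := by
    have : (-1 - 1 : ℝ) = -2 := by norm_num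
    simpa [coe_aeval_eq_eval, this] using h
  unfold legendre
  rw [eval_smul, h2, smul_eq_mul]
  have h3 : (-2 : ℝ) ^ k = (-1) ^ k * 2 ^ k := by rw [← mul_pow]; norm_num
  rw [h3]
  have : (k.factorial : ℝ) ≠ 0 := by positivity
  field_simp

theorem poly_parts (f q : ℝ[X]) :
    ∫ s in (-1 : ℝ)..1, (derivative f).eval s * q.eval s =
      f.eval 1 * q.eval 1 - f.eval (-1) * q.eval (-1) -
        ∫ s in (-1 : ℝ)..1, f.eval s * (derivative q).eval s := by
  have h := intervalIntegral.integral_mul_deriv_eq_deriv_mul (a := -1) (b := 1)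
    (u := fun s => q.eval s) (v := fun s => f.eval s)
    (u' := fun s => (derivative q).eval s) (v' := fun s => (derivative f).eval s)
    (fun x _ => q.hasDerivAt x) (fun x _ => f.hasDerivAt x)
    ((derivative q).continuous.intervalIntegrable _ _)
    ((derivative f).continuous.intervalIntegrable _ _)
  simp only [mul_comm] at h ⊢
  exact h

theorem rodrigues_orth (k j : ℕ) (hj : j ≤ k) (q : ℝ[X]) (hq : derivative^[j] q = 0) :
    ∫ s in (-1 : ℝ)..1, (derivative^[j] ((X ^ 2 - 1) ^ k : ℝ[X])).eval s * q.eval s = 0 := by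
  induction j generalizing q with
  | zero => simp at hq; simp [hq]
  | succ j ih =>
    rw [Function.iterate_succ_apply', poly_parts, ih (by omega) _ hq]
    have h1 := aeval_iterate_derivative_of_lt (A := ℝ) ((X ^ 2 - 1) ^ k : ℝ[X]) k 1
      (p' := (X + 1) ^ k) (by simpa using (rodrigues_factor k).1) (k := j) (by omega)
    have h2 := aeval_iterate_derivative_of_lt (A := ℝ) ((X ^ 2 - 1) ^ k : ℝ[X]) k (-1)
      (p' := (X - 1) ^ k) (by simpa using (rodrigues_factor k).2) (k := j) (by omega)
    rw [coe_aeval_eq_eval] at h1 h2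
    rw [h1, h2]; simp

theorem legendre_orth (k : ℕ) (q : ℝ[X]) (hq : derivative^[k] q = 0) :
    ∫ s in (-1 : ℝ)..1, (legendre k).eval s * q.eval s = 0 := by
  unfold legendre
  simp only [eval_smul, smul_eq_mul, mul_assoc]
  rw [intervalIntegral.integral_const_mul]
  rw [show (fun q : ℝ[X] => derivative q) = derivative from rfl, rodrigues_orth k k le_rfl q hq,
    mul_zero]

theorem recon_scalar (p : ℕ) (q : ℝ[X]) (hq : q.natDegree ≤ p) :
    ∫ s in (-1 : ℝ)..1,
      ((-1 : ℝ) ^ p * (derivative (legendre p - legendre (p + 1))).eval s / 2) * q.eval s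
      = - q.eval (-1) := by
  have h0 : derivative^[p] (derivative q) = 0 := by
    rw [← Function.iterate_succ_apply]
    exact iterate_derivative_eq_zero (by omega)
  have h1 : derivative^[p + 1] (derivative q) = 0 := by
    rw [Function.iterate_succ_apply', h0]; simp
  have h2 : ∫ s in (-1 : ℝ)..1,
      (legendre p - legendre (p + 1)).eval s * (derivative q).eval s = 0 := by
    simp only [eval_sub, sub_mul]
    rw [intervalIntegral.integral_sub, legendre_orth _ _ h0, legendre_orth _ _ h1, sub_zero]
    all_goals
      apply Continuous.intervalIntegrable
      fun_prop
  have h3 := poly_parts (legendre p - legendre (p + 1)) q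
  rw [h2] at h3
  have h4 : ∀ s : ℝ, ((-1 : ℝ) ^ p * (derivative (legendre p - legendre (p + 1))).eval s / 2)
      * q.eval s = ((-1 : ℝ) ^ p / 2) *
        ((derivative (legendre p - legendre (p + 1))).eval s * q.eval s) := by
    intro s; ring
  simp only [h4]
  rw [intervalIntegral.integral_const_mul, h3]
  simp only [eval_sub, legendre_eval_one, legendre_eval_neg_one, pow_succ]
  have h5 : ((-1 : ℝ) ^ p) * (-1) ^ p = 1 := by rw [← mul_pow]; simp
  linear_combination (- q.eval (-1)) * h5

theorem legendre_natDegree_le (k : ℕ) : (legendre k).natDegree ≤ k := by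
  unfold legendre
  refine (natDegree_smul_le _ _).trans ?_
  refine (natDegree_iterate_derivative _ _).trans ?_
  have : ((X ^ 2 - 1) ^ k : ℝ[X]).natDegree ≤ k * 2 := by
    refine natDegree_pow_le_of_le k ?_
    compute_degree
  omega

/-- The `i`-th component polynomial. -/
noncomputable def vpoly {n p : ℕ} (c : Fin (p + 1) → Fin n → ℝ) (i : Fin n) : ℝ[X] :=
  ∑ j : Fin (p + 1), C (c j i) * X ^ (j : ℕ)

theorem vpoly_eval {n p : ℕ} (c : Fin (p + 1) → Fin n → ℝ) (i : Fin n) (s : ℝ) :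
    (vpoly c i).eval s = pev c s i := by
  simp [vpoly, pev, eval_finsetSum]
  exact Finset.sum_congr rfl fun j _ => mul_comm _ _

theorem vpoly_deriv_eval {n p : ℕ} (c : Fin (p + 1) → Fin n → ℝ) (i : Fin n) (s : ℝ) :
    (derivative (vpoly c i)).eval s = pdev c s i := by
  simp [vpoly, pdev, eval_finsetSum, derivative_X_pow]
  refine Finset.sum_congr rfl fun j _ => ?_
  ring

theorem vpoly_natDegree {n p : ℕ} (c : Fin (p + 1) → Fin n → ℝ) (i : Fin n) :
    (vpoly c i).natDegree ≤ p := by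
  refine natDegree_sum_le_of_forall_le _ _ fun j _ => ?_
  refine (natDegree_C_mul_X_pow_le _ _).trans ?_
  omega

theorem vpoly_coeff {n p : ℕ} (c : Fin (p + 1) → Fin n → ℝ) (i : Fin n) (j : Fin (p + 1)) :
    (vpoly c i).coeff j = c j i := by
  simp [vpoly, coeff_X_pow, Fin.val_inj]

theorem pev_of_poly {n p : ℕ} (Q : Fin n → ℝ[X]) (hQ : ∀ i, (Q i).natDegree ≤ p) :
    ∃ e : Fin (p + 1) → Fin n → ℝ, ∀ s i, pev e s i = (Q i).eval s := by
  refine ⟨fun j i => (Q i).coeff j, fun s i => ?_⟩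
  rw [eval_eq_sum_range' (n := p + 1) (Nat.lt_succ_of_le (hQ i)),
    ← Fin.sum_univ_eq_sum_range (fun j => (Q i).coeff j * s ^ j)]
  simp [pev, mul_comm]

theorem pev_dot_poly {n p : ℕ} (d : Fin (p + 1) → Fin n → ℝ) (b : Fin n → ℝ) :
    ∃ q : ℝ[X], q.natDegree ≤ p ∧ ∀ s, q.eval s = pev d s ⬝ᵥ b := by
  refine ⟨∑ i, C (b i) * vpoly d i, ?_, fun s => ?_⟩
  · refine natDegree_sum_le_of_forall_le _ _ fun i _ => ?_
    exact (natDegree_C_mul_le _ _).trans (vpoly_natDegree d i)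
  · simp [eval_finsetSum, vpoly_eval, dotProduct, mul_comm]

theorem pev_continuous {n p : ℕ} (c : Fin (p + 1) → Fin n → ℝ) : Continuous (pev c) := by
  unfold pev; fun_prop

theorem pdev_continuous {n p : ℕ} (c : Fin (p + 1) → Fin n → ℝ) : Continuous (pdev c) := by
  unfold pdev; fun_prop

theorem reconD_continuous {n p : ℕ} (c : Fin (p + 1) → Fin n → ℝ) : Continuous (reconD c) := by
  have := pdev_continuous c
  unfold reconD; fun_prop

theorem dot_continuous {n : ℕ} (M : Matrix (Fin n) (Fin n) ℝ) {f g : ℝ → Fin n → ℝ}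
    (hf : Continuous f) (hg : Continuous g) : Continuous (fun s => f s ⬝ᵥ (M *ᵥ g s)) :=
  hf.dotProduct (continuous_const.matrix_mulVec hg)

theorem Pop_eq_pev {n p : ℕ} (M A : Matrix (Fin n) (Fin n) ℝ) (τ : ℝ)
    (c : Fin (p + 1) → Fin n → ℝ) :
    ∃ e : Fin (p + 1) → Fin n → ℝ, ∀ s, Pop M A τ c s = pev e s := by
  have hL : (derivative (legendre p - legendre (p + 1))).natDegree ≤ p := by
    refine (natDegree_derivative_le _).trans ?_
    have : (legendre p - legendre (p + 1)).natDegree ≤ p + 1 :=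
      (natDegree_sub_le _ _).trans (max_le ((legendre_natDegree_le p).trans (by omega))
        (legendre_natDegree_le _))
    omega
  obtain ⟨e, he⟩ := pev_of_poly (p := p)
    (fun i => ∑ k, C ((A⁻¹ * M) i k) * (derivative (vpoly c k) -
      C ((-1 : ℝ) ^ p / 2 * pev c (-1) k) * derivative (legendre p - legendre (p + 1)))
      + C (τ / 2) * vpoly c i) (by
    intro i
    refine natDegree_add_le_of_degree_le (natDegree_sum_le_of_forall_le _ _ fun k _ => ?_)
      ((natDegree_C_mul_le _ _).trans (vpoly_natDegree c i))
    refine (natDegree_C_mul_le _ _).trans ((natDegree_sub_le _ _).trans (max_le ?_ ?_))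
    · refine (natDegree_derivative_le _).trans ?_
      have := vpoly_natDegree c k
      omega
    · exact (natDegree_C_mul_le _ _).trans hL)
  refine ⟨e, fun s => ?_⟩
  ext i
  rw [he]
  simp only [eval_add, eval_finsetSum, eval_mul, eval_C, eval_sub (p := derivative (vpoly c _)),
    vpoly_eval, vpoly_deriv_eval, Pop, Pi.add_apply, Pi.smul_apply, smul_eq_mul, mulVec,
    dotProduct, reconD, Pi.sub_apply]
  congr 1
  refine Finset.sum_congr rfl fun k _ => ?_
  ring

theorem B_eq {n p : ℕ} (M A : Matrix (Fin n) (Fin n) ℝ) (hA : A.PosDef) (τ : ℝ)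
    (c d : Fin (p + 1) → Fin n → ℝ) :
    Bform M A τ c (fun s => pev d s) =
      ∫ s in (-1 : ℝ)..1, pev d s ⬝ᵥ (A *ᵥ Pop M A τ c s) := by
  have hAu : IsUnit A.det := (Matrix.isUnit_iff_isUnit_det A).1 hA.isUnit
  obtain ⟨q, hq, hqe⟩ := pev_dot_poly d (M *ᵥ pev c (-1))
  have hr := recon_scalar p q hq
  have hpt : ∀ s, pev d s ⬝ᵥ (A *ᵥ Pop M A τ c s) =
      (pev d s ⬝ᵥ (M *ᵥ pdev c s) -
        ((-1 : ℝ) ^ p * (derivative (legendre p - legendre (p + 1))).eval s / 2) * q.eval s) +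
        (τ / 2) * (pev d s ⬝ᵥ (A *ᵥ pev c s)) := by
    intro s
    rw [hqe, Pop, mulVec_add, mulVec_mulVec, Matrix.mul_nonsing_inv_cancel_left _ _ hAu,
      mulVec_smul, dotProduct_add, dotProduct_smul, reconD, mulVec_sub, mulVec_smul,
      dotProduct_sub, dotProduct_smul, smul_eq_mul, smul_eq_mul]
  have c1 := dot_continuous M (pev_continuous d) (pdev_continuous c)
  have c2 := dot_continuous A (pev_continuous d) (pev_continuous c)
  have c3 : Continuous fun s : ℝ =>
    ((-1 : ℝ) ^ p * (derivative (legendre p - legendre (p + 1))).eval s / 2) * q.eval s := by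
    fun_prop
  simp only [hpt]
  rw [intervalIntegral.integral_add ((c1.fun_sub c3).intervalIntegrable _ _)
      ((c2.const_mul _).intervalIntegrable _ _),
    intervalIntegral.integral_sub (c1.intervalIntegrable _ _) (c3.intervalIntegrable _ _),
    intervalIntegral.integral_const_mul, hr, hqe, Bform]
  ring

theorem dot_symm {n : ℕ} {M : Matrix (Fin n) (Fin n) ℝ} (hM : M.PosDef) (x y : Fin n → ℝ) :
    x ⬝ᵥ (M *ᵥ y) = y ⬝ᵥ (M *ᵥ x) := by
  have hT : Mᵀ = M := by simpa using hM.isHermitian.eq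
  rw [dotProduct_mulVec, ← mulVec_transpose, hT, dotProduct_comm]

theorem dot_nonneg {n : ℕ} {M : Matrix (Fin n) (Fin n) ℝ} (hM : M.PosDef) (x : Fin n → ℝ) :
    0 ≤ x ⬝ᵥ (M *ᵥ x) := by
  simpa using hM.posSemidef.dotProduct_mulVec_nonneg x

theorem dot_pos {n : ℕ} {M : Matrix (Fin n) (Fin n) ℝ} (hM : M.PosDef) {x : Fin n → ℝ}
    (hx : x ≠ 0) : 0 < x ⬝ᵥ (M *ᵥ x) := by
  simpa using hM.dotProduct_mulVec_pos hx

theorem cauchy_schwarz {n : ℕ} {A : Matrix (Fin n) (Fin n) ℝ} (hA : A.PosDef)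
    {f g : ℝ → Fin n → ℝ} (hf : Continuous f) (hg : Continuous g) :
    |∫ s in (-1 : ℝ)..1, f s ⬝ᵥ (A *ᵥ g s)| ≤ Xnorm A g * Xnorm A f := by
  have hff := dot_continuous A hf hf
  have hfg := dot_continuous A hf hg
  have hgg := dot_continuous A hg hg
  have hn : ∀ {h : ℝ → Fin n → ℝ}, 0 ≤ ∫ s in (-1 : ℝ)..1, h s ⬝ᵥ (A *ᵥ h s) := fun {h} =>
    intervalIntegral.integral_nonneg (by norm_num) fun s _ => dot_nonneg hA _
  have key : ∀ x : ℝ, 0 ≤ (∫ s in (-1 : ℝ)..1, f s ⬝ᵥ (A *ᵥ f s)) * (x * x) +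
      (2 * ∫ s in (-1 : ℝ)..1, f s ⬝ᵥ (A *ᵥ g s)) * x +
      ∫ s in (-1 : ℝ)..1, g s ⬝ᵥ (A *ᵥ g s) := by
    intro x
    have h := hn (h := fun s => x • f s + g s)
    have hpt : ∀ s, (x • f s + g s) ⬝ᵥ (A *ᵥ (x • f s + g s)) =
        ((x * x) * (f s ⬝ᵥ (A *ᵥ f s)) + (2 * x) * (f s ⬝ᵥ (A *ᵥ g s))) +
          g s ⬝ᵥ (A *ᵥ g s) := by
      intro s
      simp only [mulVec_add, mulVec_smul, dotProduct_add, add_dotProduct, smul_dotProduct,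
        dotProduct_smul, smul_eq_mul, dot_symm hA (g s) (f s)]
      ring
    simp only [hpt] at h
    rw [intervalIntegral.integral_add
        (((hff.const_mul _).fun_add (hfg.const_mul _)).intervalIntegrable _ _)
        (hgg.intervalIntegrable _ _),
      intervalIntegral.integral_add ((hff.const_mul _).intervalIntegrable _ _)
        ((hfg.const_mul _).intervalIntegrable _ _),
      intervalIntegral.integral_const_mul, intervalIntegral.integral_const_mul] at h
    linarith
  have hd := discrim_le_zero key
  unfold discrim at hd
  unfold Xnorm
  rw [← Real.sqrt_mul hn]
  apply Real.abs_le_sqrt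
  nlinarith

theorem pev_hasDerivAt {n p : ℕ} (c : Fin (p + 1) → Fin n → ℝ) (s : ℝ) :
    HasDerivAt (pev c) (pdev c s) s := by
  rw [hasDerivAt_pi]
  intro i
  have h := (vpoly c i).hasDerivAt s
  rw [vpoly_deriv_eval] at h
  simpa only [vpoly_eval] using h

theorem energy {n p : ℕ} {M : Matrix (Fin n) (Fin n) ℝ} (hM : M.PosDef)
    (c : Fin (p + 1) → Fin n → ℝ) :
    2 * ∫ s in (-1 : ℝ)..1, pev c s ⬝ᵥ (M *ᵥ pdev c s) =
      pev c 1 ⬝ᵥ (M *ᵥ pev c 1) - pev c (-1) ⬝ᵥ (M *ᵥ pev c (-1)) := by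
  have hd : ∀ s, HasDerivAt (fun s => pev c s ⬝ᵥ (M *ᵥ pev c s))
      (2 * (pev c s ⬝ᵥ (M *ᵥ pdev c s))) s := by
    intro s
    have h1 := fun i => hasDerivAt_pi.1 (pev_hasDerivAt c s) i
    have h2 : ∀ i, HasDerivAt (fun s => (M *ᵥ pev c s) i) ((M *ᵥ pdev c s) i) s := by
      intro i
      simp only [mulVec, dotProduct]
      exact HasDerivAt.fun_sum fun j _ => (h1 j).const_mul _
    have h3 : HasDerivAt (fun s => pev c s ⬝ᵥ (M *ᵥ pev c s))
        (∑ i, (pdev c s i * (M *ᵥ pev c s) i + pev c s i * (M *ᵥ pdev c s) i)) s := by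
      simp only [dotProduct]
      exact HasDerivAt.fun_sum fun i _ => (h1 i).mul (h2 i)
    convert h3 using 1
    rw [Finset.sum_add_distrib, two_mul]
    congr 1
    exact dot_symm hM _ _
  rw [← intervalIntegral.integral_const_mul]
  exact intervalIntegral.integral_eq_sub_of_hasDerivAt (fun s _ => hd s)
    (((dot_continuous M (pev_continuous c) (pdev_continuous c)).const_mul 2).intervalIntegrable
      _ _)

theorem coercive {n p : ℕ} {M A : Matrix (Fin n) (Fin n) ℝ} (hM : M.PosDef) (hA : A.PosDef)
    {τ : ℝ} (hτ : 0 < τ) (c : Fin (p + 1) → Fin n → ℝ) (hc : c ≠ 0) :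
    0 < Bform M A τ c (fun s => pev c s) := by
  have hI : 0 < ∫ s in (-1 : ℝ)..1, pev c s ⬝ᵥ (A *ᵥ pev c s) := by
    refine intervalIntegral.integral_pos (by norm_num)
      (dot_continuous A (pev_continuous c) (pev_continuous c)).continuousOn
      (fun s _ => dot_nonneg hA _) ?_
    by_contra! hcon
    apply hc
    have hz : ∀ s ∈ Set.Icc (-1 : ℝ) 1, pev c s = 0 := by
      intro s hs
      by_contra hne
      exact absurd (dot_pos hA hne) (not_lt.2 (hcon s hs))
    ext j i
    have hv : vpoly c i = 0 := by
      refine eq_zero_of_infinite_isRoot _ ((Set.Icc_infinite (by norm_num)).mono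
        (s := Set.Icc (-1 : ℝ) 1) fun s hs => ?_)
      simp [IsRoot, vpoly_eval, hz s hs]
    rw [← vpoly_coeff c i j, hv]; simp
  have hE := energy hM c
  have h1 := dot_nonneg hM (pev c 1)
  have h2 := dot_nonneg hM (pev c (-1))
  have h3 := mul_pos (half_pos hτ) hI
  unfold Bform
  linarith

/-- **Inf-sup identity.** With `‖u‖_L := √(B(u,Pu))` and `‖v‖_X := √(∫_{−1}^{1} ‖v(s)‖²_A ds)`:
(i) `|B(u,v)| ≤ ‖u‖_L ‖v‖_X` for all `u, v ∈ V_p`; (ii) `‖Pu‖_X = ‖u‖_L`; and consequently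
(iii) for every nonzero `u ∈ V_p`, the supremum over nonzero `v ∈ V_p` of `B(u,v)/‖v‖_X`
equals `‖u‖_L`, the supremum being attained (at `v = Pu`). -/
theorem inf_sup_identity {n p : ℕ} (M A : Matrix (Fin n) (Fin n) ℝ)
    (hM : M.PosDef) (hA : A.PosDef) (τ : ℝ) (hτ : 0 < τ) :
    (∀ c d : Fin (p + 1) → Fin n → ℝ,
      |Bform M A τ c (fun s => pev d s)| ≤ Lnorm M A τ c * Xnorm A (fun s => pev d s)) ∧
    (∀ c : Fin (p + 1) → Fin n → ℝ,
      Xnorm A (fun s => Pop M A τ c s) = Lnorm M A τ c) ∧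
    (∀ c : Fin (p + 1) → Fin n → ℝ, c ≠ 0 →
      IsGreatest {x : ℝ | ∃ d : Fin (p + 1) → Fin n → ℝ, d ≠ 0 ∧
          x = Bform M A τ c (fun s => pev d s) / Xnorm A (fun s => pev d s)}
        (Lnorm M A τ c)) := by
  have hB := B_eq (p := p) M A hA τ
  have hi : ∀ c : Fin (p + 1) → Fin n → ℝ,
      Xnorm A (fun s => Pop M A τ c s) = Lnorm M A τ c := by
    intro c
    obtain ⟨e, he⟩ := Pop_eq_pev M A τ c
    have := hB c e
    simp only [← he] at this
    rw [Lnorm, this, Xnorm]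
  have hcs : ∀ c d : Fin (p + 1) → Fin n → ℝ,
      |Bform M A τ c (fun s => pev d s)| ≤
        Lnorm M A τ c * Xnorm A (fun s => pev d s) := by
    intro c d
    obtain ⟨e, he⟩ := Pop_eq_pev M A τ c
    rw [← hi, hB]
    simp only [he]
    exact cauchy_schwarz hA (pev_continuous d) (pev_continuous e)
  refine ⟨hcs, hi, fun c hc => ⟨?_, ?_⟩⟩
  · obtain ⟨e, he⟩ := Pop_eq_pev M A τ c
    refine ⟨e, ?_, ?_⟩
    · rintro rfl
      have h := coercive hM hA hτ c hc
      rw [hB] at h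
      simp [he, pev] at h
    · have h0 : (0 : ℝ) ≤ ∫ s in (-1 : ℝ)..1, pev e s ⬝ᵥ (A *ᵥ pev e s) :=
        intervalIntegral.integral_nonneg (by norm_num) fun s _ => dot_nonneg hA _
      rw [← hi, hB]
      simp only [he, Xnorm]
      exact (Real.div_sqrt).symm
  · rintro x ⟨d, -, rfl⟩
    exact div_le_of_le_mul₀ (Real.sqrt_nonneg _) (Real.sqrt_nonneg _)
      ((le_abs_self _).trans (hcs c d))
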